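/- For random variables $X, Y$ with finite ranges on a probability space $(\Omega, \mu)$, let $H[X] = -\sum_x \mu(X = x)\log \mu(X = x)$ (natural logarithm, $0\log 0 = 0$), $H[X \mid Y] = H[\langle X, Y\rangle] - H[Y]$ and $I[X : Y] = H[X] + H[Y] - H[\langle X, Y\rangle]$ denote Shannon entropy, conditional entropy and mutual information. Let $(\Omega, \mu)$ be a probability space, let $\iota$ be a finite nonempty set and $G$ a finite additive abelian group, both with the discrete $\sigma$-algebra, and let $A : \iota \to G$ be a map. Let $I, \hat I : \Omega \to \iota$ and $Z : \Omega \to G$ be random variables such that $Z$ is independent of $I$, and define $\hat Z := A\circ I + Z - A\circ \hat I$. Then $$I[\hat Z : \langle I, \hat I\rangle] \;\le\; I[\langle Z, \hat Z\rangle : I] + H[\hat I \mid I] \;\le\; H[\hat Z \mid Z] + H[\hat I \mid I].$$ In particular, $I[\hat Z : \langle I, \hat I\rangle] \le H[\hat Z \mid Z] + H[\hat I \mid I]$. -/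

import Mathlib

open MeasureTheory

/-- Shannon entropy (natural logarithm) of a finite-valued random variable. -/
noncomputable def entropyRV {Ω : Type*} [MeasurableSpace Ω] (μ : Measure Ω)
    {S : Type*} [Fintype S] (X : Ω → S) : ℝ :=
  ∑ s : S, Real.negMulLog ((μ (X ⁻¹' {s})).toReal)

/-- Conditional entropy `H[X | Y] = H[⟨X,Y⟩] - H[Y]`. -/
noncomputable def condEntropyRV {Ω : Type*} [MeasurableSpace Ω] (μ : Measure Ω)
    {S T : Type*} [Fintype S] [Fintype T] (X : Ω → S) (Y : Ω → T) : ℝ :=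
  entropyRV μ (fun ω => (X ω, Y ω)) - entropyRV μ Y

/-- Mutual information `I[X : Y] = H[X] + H[Y] - H[⟨X,Y⟩]`. -/
noncomputable def mutualInfoRV {Ω : Type*} [MeasurableSpace Ω] (μ : Measure Ω)
    {S T : Type*} [Fintype S] [Fintype T] (X : Ω → S) (Y : Ω → T) : ℝ :=
  entropyRV μ X + entropyRV μ Y - entropyRV μ (fun ω => (X ω, Y ω))

/-!
Revealing `Î` on top of `I` raises the information about `Ẑ` by at most `H[Î | I]`, and passing
from `Ẑ` to `⟨Z, Ẑ⟩` can only raise the information about `I`, by submodularity of entropy. Since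
`Z` is independent of `I`, the information `I[⟨Z, Ẑ⟩ : I]` equals `I[Ẑ : I | Z]`, which is at most
`H[Ẑ | Z]`.
-/

theorem mul_log_add_log_sub_le {p a b c : ℝ} (hp : 0 ≤ p) (ha : p ≤ a) (hb : p ≤ b)
    (hc : p ≤ c) :
    p * (Real.log a + Real.log b - Real.log c - Real.log p) ≤ a * b / c - p := by
  rcases hp.eq_or_lt with rfl | hp
  · simpa using div_nonneg (mul_nonneg ha hb) hc
  have ha : 0 < a := hp.trans_le ha
  have hb : 0 < b := hp.trans_le hb
  have hc : 0 < c := hp.trans_le hc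
  calc p * (Real.log a + Real.log b - Real.log c - Real.log p)
      = p * Real.log (a * b / c / p) := by
        rw [Real.log_div (by positivity) hp.ne', Real.log_div (by positivity) hc.ne',
          Real.log_mul ha.ne' hb.ne']
    _ ≤ p * (a * b / c / p - 1) :=
        mul_le_mul_of_nonneg_left (Real.log_le_sub_one_of_pos (by positivity)) hp.le
    _ = a * b / c - p := by field_simp

section Entropy

variable {Ω : Type*} [MeasurableSpace Ω] {μ : Measure Ω} {S T U V : Type*}

theorem measureReal_preimage_singleton_le_comp [IsFiniteMeasure μ] (X : Ω → S) (f : S → T)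
    (s : S) : μ.real (X ⁻¹' {s}) ≤ μ.real ((fun ω => f (X ω)) ⁻¹' {f s}) :=
  measureReal_mono fun _ hω => congrArg f hω

theorem entropyRV_prodMk_comm [Fintype S] [Fintype T] (X : Ω → S) (Y : Ω → T) :
    entropyRV μ (fun ω => (X ω, Y ω)) = entropyRV μ (fun ω => (Y ω, X ω)) := by
  refine Fintype.sum_equiv (Equiv.prodComm S T) _ _ fun p => ?_
  congr 3
  ext ω
  simp [Prod.ext_iff, and_comm]

variable [Fintype S] [MeasurableSpace S] [MeasurableSingletonClass S]

theorem sum_measureReal_preimage_singleton_univ [IsFiniteMeasure μ] {X : Ω → S}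
    (hX : Measurable X) : ∑ s, μ.real (X ⁻¹' {s}) = μ.real Set.univ := by
  simpa using sum_measureReal_preimage_singleton Finset.univ
    fun s _ => hX (measurableSet_singleton s)

theorem sum_measureReal_preimage_prodMk_left [IsFiniteMeasure μ] {X : Ω → S}
    (hX : Measurable X) (Y : Ω → T) (t : T) :
    ∑ s, μ.real ((fun ω => (X ω, Y ω)) ⁻¹' {(s, t)}) = μ.real (Y ⁻¹' {t}) := by
  simpa only [measureReal_restrict_apply (hX (measurableSet_singleton _)),
    measureReal_restrict_apply MeasurableSet.univ, Set.univ_inter, ← Set.mk_preimage_prod,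
    Set.singleton_prod_singleton]
    using sum_measureReal_preimage_singleton_univ (μ := μ.restrict (Y ⁻¹' {t})) hX

theorem sum_measureReal_preimage_prodMk_right [IsFiniteMeasure μ] (Y : Ω → T) {X : Ω → S}
    (hX : Measurable X) (t : T) :
    ∑ s, μ.real ((fun ω => (Y ω, X ω)) ⁻¹' {(t, s)}) = μ.real (Y ⁻¹' {t}) := by
  simpa only [← Set.singleton_prod_singleton, Set.mk_preimage_prod, Set.inter_comm]
    using sum_measureReal_preimage_prodMk_left hX Y t

theorem measureReal_preimage_comp_singleton [IsFiniteMeasure μ] [DecidableEq T] {X : Ω → S}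
    (hX : Measurable X) (f : S → T) (t : T) :
    μ.real ((fun ω => f (X ω)) ⁻¹' {t}) = ∑ s with f s = t, μ.real (X ⁻¹' {s}) := by
  rw [sum_measureReal_preimage_singleton _ fun s _ => hX (measurableSet_singleton s)]
  congr 1
  ext ω
  simp

theorem entropyRV_comp_eq_sum [IsFiniteMeasure μ] [Fintype T] {X : Ω → S} (hX : Measurable X)
    (f : S → T) :
    entropyRV μ (fun ω => f (X ω)) =
      -∑ s, μ.real (X ⁻¹' {s}) * Real.log (μ.real ((fun ω => f (X ω)) ⁻¹' {f s})) := by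
  classical
  let q (t : T) : ℝ := μ.real ((fun ω => f (X ω)) ⁻¹' {t})
  calc entropyRV μ (fun ω => f (X ω))
      = -∑ t, q t * Real.log (q t) := by
        simp only [entropyRV, ← measureReal_def, Real.negMulLog_eq_neg, Finset.sum_neg_distrib, q]
    _ = -∑ t, ∑ s with f s = t, μ.real (X ⁻¹' {s}) * Real.log (q t) := by
        simp only [← Finset.sum_mul, ← measureReal_preimage_comp_singleton hX f, q]
    _ = -∑ s, μ.real (X ⁻¹' {s}) * Real.log (q (f s)) := by
        rw [← Finset.sum_fiberwise Finset.univ f fun s => _ * Real.log (q (f s))]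
        refine congrArg _ (Finset.sum_congr rfl fun t _ => Finset.sum_congr rfl fun s hs => ?_)
        rw [(Finset.mem_filter.mp hs).2]

theorem entropyRV_comp_le [IsFiniteMeasure μ] [Fintype T] {X : Ω → S} (hX : Measurable X)
    (f : S → T) : entropyRV μ (fun ω => f (X ω)) ≤ entropyRV μ X := by
  rw [entropyRV_comp_eq_sum hX f, entropyRV_comp_eq_sum hX fun s => s]
  refine neg_le_neg (Finset.sum_le_sum fun s _ => ?_)
  rcases (measureReal_nonneg (μ := μ) (s := X ⁻¹' {s})).eq_or_lt with h_zero | h_pos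
  · simp [← h_zero]
  · exact mul_le_mul_of_nonneg_left
      (Real.log_le_log h_pos (measureReal_preimage_singleton_le_comp X f s)) h_pos.le

variable [Fintype T] [MeasurableSpace T] [MeasurableSingletonClass T]

theorem entropyRV_prodMk_of_indepFun [IsProbabilityMeasure μ] {X : Ω → S} {Y : Ω → T}
    (hX : Measurable X) (hY : Measurable Y) (h : ProbabilityTheory.IndepFun X Y μ) :
    entropyRV μ (fun ω => (X ω, Y ω)) = entropyRV μ X + entropyRV μ Y := by
  have h_mul (s : S) (t : T) : μ.real ((fun ω => (X ω, Y ω)) ⁻¹' {(s, t)}) =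
      μ.real (X ⁻¹' {s}) * μ.real (Y ⁻¹' {t}) := by
    rw [← Set.singleton_prod_singleton, Set.mk_preimage_prod]
    simp only [measureReal_def, h.measure_inter_preimage_eq_mul _ _ (measurableSet_singleton s)
      (measurableSet_singleton t), ENNReal.toReal_mul]
  simp only [entropyRV, ← measureReal_def, Fintype.sum_prod_type, h_mul, Real.negMulLog_mul,
    Finset.sum_add_distrib, ← Finset.sum_mul, ← Finset.mul_sum,
    sum_measureReal_preimage_singleton_univ hX, sum_measureReal_preimage_singleton_univ hY,
    probReal_univ, one_mul]

variable [Fintype U] [MeasurableSpace U] [MeasurableSingletonClass U]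

-- The summand is `P(x, y) P(y, z) / P(y)`, the law of `((X, Y), Z)` if `X` and `Z` were
-- conditionally independent given `Y`.
theorem sum_measureReal_prodMk_mul_prodMk_div [IsFiniteMeasure μ]
    {X : Ω → S} {Y : Ω → T} {Z : Ω → U}
    (hX : Measurable X) (hY : Measurable Y) (hZ : Measurable Z) :
    ∑ s : (S × T) × U, μ.real ((fun ω => (X ω, Y ω)) ⁻¹' {s.1}) *
        μ.real ((fun ω => (Y ω, Z ω)) ⁻¹' {(s.1.2, s.2)}) / μ.real (Y ⁻¹' {s.1.2}) =
      μ.real Set.univ := by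
  simp only [Fintype.sum_prod_type, ← Finset.sum_div, ← Finset.mul_sum,
    sum_measureReal_preimage_prodMk_right Y hZ]
  rw [Finset.sum_comm]
  simp only [← Finset.sum_div, ← Finset.sum_mul, sum_measureReal_preimage_prodMk_left hX Y,
    mul_self_div_self, sum_measureReal_preimage_singleton_univ hY]

-- Gibbs' inequality for the joint law against the conditionally independent one.
theorem entropyRV_prodMk_prodMk_add_entropyRV_le [IsFiniteMeasure μ]
    {X : Ω → S} {Y : Ω → T} {Z : Ω → U}
    (hX : Measurable X) (hY : Measurable Y) (hZ : Measurable Z) :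
    entropyRV μ (fun ω => ((X ω, Y ω), Z ω)) + entropyRV μ Y ≤
      entropyRV μ (fun ω => (X ω, Y ω)) + entropyRV μ (fun ω => (Y ω, Z ω)) := by
  let W : Ω → (S × T) × U := fun ω => ((X ω, Y ω), Z ω)
  have hW : Measurable W := (hX.prodMk hY).prodMk hZ
  have h_xyz := entropyRV_comp_eq_sum (μ := μ) hW fun s => s
  have h_xy := entropyRV_comp_eq_sum (μ := μ) hW Prod.fst
  have h_yz := entropyRV_comp_eq_sum (μ := μ) hW fun s => (s.1.2, s.2)
  have h_y := entropyRV_comp_eq_sum (μ := μ) hW fun s => s.1.2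
  have h_gibbs := Finset.sum_le_sum fun s (_ : s ∈ Finset.univ) => mul_log_add_log_sub_le
    (measureReal_nonneg (μ := μ) (s := W ⁻¹' {s}))
    (measureReal_preimage_singleton_le_comp W Prod.fst s)
    (measureReal_preimage_singleton_le_comp W (fun s => (s.1.2, s.2)) s)
    (measureReal_preimage_singleton_le_comp W (fun s => s.1.2) s)
  simp only [mul_add, mul_sub, Finset.sum_add_distrib, Finset.sum_sub_distrib,
    sum_measureReal_preimage_singleton_univ hW, W,
    sum_measureReal_prodMk_mul_prodMk_div hX hY hZ] at h_gibbs
  simp only [W] at h_xyz h_xy h_yz h_y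
  linarith

theorem mutualInfoRV_le_prodMk_left [IsFiniteMeasure μ] {X : Ω → S} {Y : Ω → T} {Z : Ω → U}
    (hX : Measurable X) (hY : Measurable Y) (hZ : Measurable Z) :
    mutualInfoRV μ Y Z ≤ mutualInfoRV μ (fun ω => (X ω, Y ω)) Z := by
  have h_submod := entropyRV_prodMk_prodMk_add_entropyRV_le (μ := μ) hX hY hZ
  unfold mutualInfoRV
  linarith

theorem mutualInfoRV_prodMk_right_le_add_condEntropyRV [IsFiniteMeasure μ]
    {X : Ω → S} {Y : Ω → T} {Z : Ω → U}
    (hX : Measurable X) (hY : Measurable Y) (hZ : Measurable Z) :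
    mutualInfoRV μ X (fun ω => (Y ω, Z ω)) ≤ mutualInfoRV μ X Y + condEntropyRV μ Z Y := by
  have h_forget : entropyRV μ (fun ω => (X ω, Y ω)) ≤ entropyRV μ (fun ω => (X ω, (Y ω, Z ω))) :=
    entropyRV_comp_le (hX.prodMk (hY.prodMk hZ)) fun s => (s.1, s.2.1)
  have h_comm := entropyRV_prodMk_comm (μ := μ) Y Z
  unfold mutualInfoRV condEntropyRV
  linarith

theorem mutualInfoRV_prodMk_left_le_condEntropyRV_of_indepFun [IsProbabilityMeasure μ]
    {X : Ω → S} {Y : Ω → T} {Z : Ω → U}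
    (hX : Measurable X) (hY : Measurable Y) (hZ : Measurable Z)
    (h : ProbabilityTheory.IndepFun X Z μ) :
    mutualInfoRV μ (fun ω => (X ω, Y ω)) Z ≤ condEntropyRV μ Y X := by
  have h_forget : entropyRV μ (fun ω => (X ω, Z ω)) ≤ entropyRV μ (fun ω => ((X ω, Y ω), Z ω)) :=
    entropyRV_comp_le ((hX.prodMk hY).prodMk hZ) fun s => (s.1.1, s.2)
  have h_indep := entropyRV_prodMk_of_indepFun hX hZ h
  have h_comm := entropyRV_prodMk_comm (μ := μ) X Y
  unfold mutualInfoRV condEntropyRV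
  linarith

variable [Fintype V] [MeasurableSpace V] [MeasurableSingletonClass V]

theorem mutualInfo_recovered_noise_le_general [IsProbabilityMeasure μ]
    {I : Ω → S} {Ihat : Ω → T} {Z : Ω → U} {Zhat : Ω → V}
    (hI : Measurable I) (hIhat : Measurable Ihat) (hZ : Measurable Z) (hZhat : Measurable Zhat)
    (hInd : ProbabilityTheory.IndepFun Z I μ) :
    mutualInfoRV μ Zhat (fun ω => (I ω, Ihat ω)) ≤
        mutualInfoRV μ (fun ω => (Z ω, Zhat ω)) I + condEntropyRV μ Ihat I ∧
      mutualInfoRV μ (fun ω => (Z ω, Zhat ω)) I + condEntropyRV μ Ihat I ≤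
        condEntropyRV μ Zhat Z + condEntropyRV μ Ihat I := by
  constructor
  · calc mutualInfoRV μ Zhat (fun ω => (I ω, Ihat ω))
        ≤ mutualInfoRV μ Zhat I + condEntropyRV μ Ihat I :=
          mutualInfoRV_prodMk_right_le_add_condEntropyRV hZhat hI hIhat
      _ ≤ mutualInfoRV μ (fun ω => (Z ω, Zhat ω)) I + condEntropyRV μ Ihat I := by
          gcongr
          exact mutualInfoRV_le_prodMk_left hZ hZhat hI
  · gcongr
    exact mutualInfoRV_prodMk_left_le_condEntropyRV_of_indepFun hZ hZhat hI hInd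

end Entropy

/-- The chain `I[Ẑ : ⟨I, Î⟩] ≤ I[⟨Z, Ẑ⟩ : I] + H[Î | I] ≤ H[Ẑ | Z] + H[Î | I]`, where
`Ẑ = A ∘ I + Z - A ∘ Î` and the channel noise `Z` is independent of the transmitted index `I`.
The finite types `ι` and `G` carry the discrete σ-algebra. -/
theorem mutualInfo_recovered_noise_le
    {Ω : Type*} [MeasurableSpace Ω] (μ : Measure Ω) [IsProbabilityMeasure μ]
    {ι : Type*} [Fintype ι] [Nonempty ι] [MeasurableSpace ι] [MeasurableSingletonClass ι]
    {G : Type*} [Fintype G] [AddCommGroup G] [MeasurableSpace G] [MeasurableSingletonClass G]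
    (A : ι → G) (I Ihat : Ω → ι) (Z : Ω → G)
    (hI : Measurable I) (hIhat : Measurable Ihat) (hZ : Measurable Z)
    (hInd : ProbabilityTheory.IndepFun Z I μ)
    (Zhat : Ω → G) (hZhat : Zhat = fun ω => A (I ω) + Z ω - A (Ihat ω)) :
    mutualInfoRV μ Zhat (fun ω => (I ω, Ihat ω)) ≤
        mutualInfoRV μ (fun ω => (Z ω, Zhat ω)) I + condEntropyRV μ Ihat I ∧
      mutualInfoRV μ (fun ω => (Z ω, Zhat ω)) I + condEntropyRV μ Ihat I ≤
        condEntropyRV μ Zhat Z + condEntropyRV μ Ihat I := by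
  have hZhat_meas : Measurable Zhat := hZhat ▸
    (measurable_of_finite fun p : ι × G × ι => A p.1 + p.2.1 - A p.2.2).comp
      (hI.prodMk (hZ.prodMk hIhat))
  exact mutualInfo_recovered_noise_le_general hI hIhat hZ hZhat_meas hInd
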